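/- Suppose g(r) = o(r^{-c}) as r → ∞ for some c > 3d. Then almost surely, liminf_{n→∞} (α n d_n^d)/(log n) ≥ (c − 3d)/(c − d). -/

import Mathlib

open MeasureTheory ProbabilityTheory Filter Set

noncomputable section

namespace RCM

/-- The toroidal metric on the unit cube. -/
def torusDist {d : ℕ} (x y : EuclideanSpace ℝ (Fin d)) : ℝ :=
  ⨅ z : Fin d → ℤ, ‖x - y - (WithLp.equiv 2 (Fin d → ℝ)).symm (fun i => (z i : ℝ))‖

/-- The half-open unit cube `S = (-1/2, 1/2]^d`. -/
def cube (d : ℕ) : Set (EuclideanSpace ℝ (Fin d)) :=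
  {x | ∀ i, x i ∈ Set.Ioc (-(1/2) : ℝ) (1/2)}

/-- The random connection model: i.i.d. uniform points `X`, coupled Poisson counts `N`,
i.i.d. uniform edge variables `U`, with the three families mutually independent, and a
non-increasing connection function `g : [0,∞) → [0,1]` with finite positive integral `α`. -/
structure Model (d : ℕ) {Ω : Type*} [MeasurableSpace Ω] (P : Measure Ω) where
  g : ℝ → ℝ
  α : ℝ
  X : ℕ → Ω → EuclideanSpace ℝ (Fin d)
  N : ℕ → Ω → ℕ
  U : ℕ → ℕ → Ω → ℝ
  g_antitone : AntitoneOn g (Set.Ici 0)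
  g_mem : ∀ r : ℝ, 0 ≤ r → g r ∈ Set.Icc (0 : ℝ) 1
  g_integrable : MeasureTheory.Integrable (fun x : EuclideanSpace ℝ (Fin d) => g ‖x‖)
  α_def : α = ∫ x : EuclideanSpace ℝ (Fin d), g ‖x‖
  α_pos : 0 < α
  X_meas : ∀ i, Measurable (X i)
  X_unif : ∀ i : ℕ, 1 ≤ i → Measure.map (X i) P = volume.restrict (cube d)
  X_indep : iIndepFun
    (fun i : {i : ℕ // 1 ≤ i} => X i) P
  N_meas : ∀ n, Measurable (N n)
  N_mono : ∀ ω, Monotone fun n => N n ω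
  N_poisson : ∀ n k : ℕ,
    P {ω | N n ω = k} = ENNReal.ofReal (Real.exp (-(n : ℝ)) * (n : ℝ) ^ k / k.factorial)
  U_meas : ∀ i j, Measurable (U i j)
  U_unif : ∀ i j : ℕ, 1 ≤ i → i < j →
    Measure.map (U i j) P = volume.restrict (Set.Icc (0 : ℝ) 1)
  U_indep : iIndepFun
    (fun p : {p : ℕ × ℕ // 1 ≤ p.1 ∧ p.1 < p.2} => U p.1.1 p.1.2) P
  families_indep : iIndep
    (![MeasurableSpace.comap (fun ω => fun i : ℕ => X i ω) inferInstance,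
       MeasurableSpace.comap (fun ω => fun n : ℕ => N n ω) inferInstance,
       MeasurableSpace.comap (fun ω => fun p : ℕ × ℕ => U p.1 p.2 ω) inferInstance]) P

variable {d : ℕ} {Ω : Type*} [MeasurableSpace Ω] {P : Measure Ω}

/-- Adjacency in the graph `G_n(r)`: vertices `1 ≤ i,j ≤ N_n` are joined iff
`U_{ij} ≤ g(dist(X_i,X_j)/r)`. -/
def adj (M : Model d P) (n : ℕ) (r : ℝ) (ω : Ω) (i j : ℕ) : Prop :=
  i ≠ j ∧ 1 ≤ i ∧ 1 ≤ j ∧ i ≤ M.N n ω ∧ j ≤ M.N n ω ∧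
    M.U (min i j) (max i j) ω ≤ M.g (torusDist (M.X i ω) (M.X j ω) / r)

/-- The degree of vertex `i` in `G_n(r)`. -/
def deg (M : Model d P) (n : ℕ) (r : ℝ) (ω : Ω) (i : ℕ) : ℕ :=
  {j : ℕ | adj M n r ω i j}.ncard

/-- `W_n(r)`, the number of isolated vertices of `G_n(r)`. -/
def isolatedCount (M : Model d P) (n : ℕ) (r : ℝ) (ω : Ω) : ℕ :=
  {i : ℕ | 1 ≤ i ∧ i ≤ M.N n ω ∧ deg M n r ω i = 0}.ncard


/-- `r̂_n(γ)` defined by `r̂_n(γ)^d = γ log n / (α n)`. -/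
def rhat (M : Model d P) (γ : ℝ) (n : ℕ) : ℝ :=
  (γ * Real.log n / (M.α * n)) ^ ((1 : ℝ) / d)

/-- `d_n`, the critical parameter for absence of isolated nodes. -/
def critRadius (M : Model d P) (n : ℕ) (ω : Ω) : ℝ :=
  sInf {r : ℝ | 0 < r ∧ isolatedCount M n r ω = 0}

/-- The maximum vertex degree `Δ_n` of `G_n(r)`. -/
def maxDeg (M : Model d P) (n : ℕ) (r : ℝ) (ω : Ω) : ℕ :=
  (Finset.Icc 1 (M.N n ω)).sup (deg M n r ω)

/-- The minimum vertex degree `δ_n` of `G_n(r)`. -/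
def minDeg (M : Model d P) (n : ℕ) (r : ℝ) (ω : Ω) : ℕ :=
  sInf {k : ℕ | ∃ i, 1 ≤ i ∧ i ≤ M.N n ω ∧ deg M n r ω i = k}

/-- The length (toroidal metric) of the longest edge of `G_n(r)` (`0` if there are no edges). -/
def longestEdge (M : Model d P) (n : ℕ) (r : ℝ) (ω : Ω) : ℝ :=
  sSup ({0} ∪ {t : ℝ | ∃ i j, adj M n r ω i j ∧ t = torusDist (M.X i ω) (M.X j ω)})

/-- Connectivity of `G_n(r)`: any two vertices are joined by a path. -/
def connectedGraph (M : Model d P) (n : ℕ) (r : ℝ) (ω : Ω) : Prop :=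
  ∀ i j : ℕ, 1 ≤ i → i ≤ M.N n ω → 1 ≤ j → j ≤ M.N n ω →
    Relation.ReflTransGen (adj M n r ω) i j

/-- `H(x) = 1 - x + x log x` (with `H(0) = 1`, since `log 0 = 0` in Lean). -/
def H (x : ℝ) : ℝ := 1 - x + x * Real.log x

/-- The inverse of the restriction of `H` to `[1, ∞)`. -/
def Hplusinv (y : ℝ) : ℝ := sInf {x : ℝ | 1 ≤ x ∧ y ≤ H x}

/-- The inverse of the restriction of `H` to `[0, 1]`. -/
def Hminusinv (y : ℝ) : ℝ := sInf {x : ℝ | 0 ≤ x ∧ H x ≤ y}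

/-- The standard normal distribution function. -/
def stdNormalCDF (x : ℝ) : ℝ :=
  ∫ t in Set.Iic x, Real.exp (-t ^ 2 / 2) / Real.sqrt (2 * Real.pi)

/-!
For `α r ^ d = γ log s / s` with `γ < 1`, a graph on about `s` uniform points has about
`s ^ (1 - γ)` isolated vertices on average. Two vertices are isolated almost independently: given
their positions, the correlation is governed by the expected number of common neighbours, which
averages to the square of the connection probability. The second moment method therefore bounds the
probability that no vertex is isolated by a negative power of `s` up to logarithms, which is
summable along the scales `s = ρ ^ k`. Monotonicity in `r` and concentration of the Poisson counts
`N n` pass from these scales to all `n`, giving `1 ≤ liminf` as `γ → 1` and `ρ → 1`. A first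
moment bound shows that `critRadius M n ω ^ d` is eventually at most a multiple of `log n / n`, so
neither `sInf ∅ = 0` in `critRadius` nor the junk value of an unbounded `liminf` interferes.
-/

section Kernel

lemma pow_succ_le_pow_succ_add {s t b j : ℝ} (hs : s ∈ Icc 0 b) (ht : t ∈ Icc 0 b)
    (hj : 0 ≤ j) (hst : s - t ≤ j) (k : ℕ) :
    s ^ (k + 1) ≤ t ^ (k + 1) + (k + 1) * j * b ^ k := by
  have hb : 0 ≤ b := hs.1.trans hs.2
  rcases le_total s t with h | h
  · have : s ^ (k + 1) ≤ t ^ (k + 1) := pow_le_pow_left₀ hs.1 h _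
    have : 0 ≤ (k + 1) * j * b ^ k := by positivity
    linarith
  · have hpow : |s ^ (k + 1) - t ^ (k + 1)| ≤ |s - t| * (k + 1 : ℕ) * max |s| |t| ^ k :=
      abs_pow_sub_pow_le s t (k + 1)
    rw [abs_of_nonneg (sub_nonneg.2 h), abs_of_nonneg hs.1, abs_of_nonneg ht.1] at hpow
    have hle : (s - t) * (k + 1 : ℕ) * max s t ^ k ≤ j * (k + 1 : ℕ) * b ^ k := by
      have := max_le hs.2 ht.2
      have := hs.1.trans (le_max_left s t)
      gcongr
    push_cast at hpow hle
    linarith [le_abs_self (s ^ (k + 1) - t ^ (k + 1))]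

variable {E : Type*} [MeasurableSpace E] {μ : Measure E} [IsProbabilityMeasure μ]

lemma integral_one_sub_mul_one_sub {f g : E → ℝ} (hf : Integrable f μ) (hg : Integrable g μ)
    (hfg : Integrable (fun x ↦ f x * g x) μ) :
    ∫ x, (1 - f x) * (1 - g x) ∂μ =
      1 - ∫ x, f x ∂μ - ∫ x, g x ∂μ + ∫ x, f x * g x ∂μ := by
  have h1 : Integrable (fun x ↦ 1 - f x) μ := (integrable_const 1).sub hf
  have h2 : Integrable (fun x ↦ 1 - f x - g x) μ := h1.sub hg
  calc ∫ x, (1 - f x) * (1 - g x) ∂μ = ∫ x, (1 - f x - g x) + f x * g x ∂μ := by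
        congr! 2 with x; ring
    _ = _ := by
        rw [integral_add h2 hfg, integral_sub h1 hg, integral_sub (integrable_const 1) hf]
        simp

variable {κ : E → E → ℝ} {θ : ℝ}

lemma integrable_mul_kernel (hκ : Measurable (Function.uncurry κ))
    (h01 : ∀ x y, κ x y ∈ Icc (0 : ℝ) 1) (ν : Measure (E × E)) [IsProbabilityMeasure ν] :
    Integrable (Function.uncurry fun (p : E × E) z ↦ κ p.1 z * κ p.2 z) (ν.prod μ) :=
  .of_mem_Icc 0 1
    ((hκ.comp (by fun_prop : Measurable fun q : (E × E) × E ↦ (q.1.1, q.2))).mul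
      (hκ.comp (by fun_prop : Measurable fun q : (E × E) × E ↦ (q.1.2, q.2)))).aemeasurable
    (ae_of_all _ fun _ ↦
      ⟨mul_nonneg (h01 _ _).1 (h01 _ _).1, mul_le_one₀ (h01 _ _).2 (h01 _ _).1 (h01 _ _).2⟩)

lemma integral_integral_mul_eq_sq (hκ : Measurable (Function.uncurry κ))
    (h01 : ∀ x y, κ x y ∈ Icc (0 : ℝ) 1) (hcol : ∀ y, ∫ x, κ x y ∂μ = θ) :
    ∫ p, ∫ z, κ p.1 z * κ p.2 z ∂μ ∂(μ.prod μ) = θ ^ 2 :=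
  calc ∫ p, ∫ z, κ p.1 z * κ p.2 z ∂μ ∂(μ.prod μ)
      = ∫ z, ∫ p : E × E, κ p.1 z * κ p.2 z ∂(μ.prod μ) ∂μ :=
        integral_integral_swap (integrable_mul_kernel hκ h01 _)
    _ = ∫ z, (∫ x, κ x z ∂μ) * (∫ y, κ y z ∂μ) ∂μ := by
        congr! 2 with z
        exact integral_prod_mul (fun x ↦ κ x z) (fun y ↦ κ y z)
    _ = θ ^ 2 := by simp [hcol, sq]

lemma integral_joint_one_sub_pow_le (hκ : Measurable (Function.uncurry κ))
    (h01 : ∀ x y, κ x y ∈ Icc (0 : ℝ) 1) (hrow : ∀ x, ∫ y, κ x y ∂μ = θ)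
    (hcol : ∀ y, ∫ x, κ x y ∂μ = θ) (k : ℕ) :
    ∫ p, (∫ z, (1 - κ p.1 z) * (1 - κ p.2 z) ∂μ) ^ (k + 1) ∂(μ.prod μ) ≤
      ((1 - θ) ^ 2) ^ (k + 1) + (k + 1) * θ ^ 2 * (1 - θ) ^ k := by
  set J : E × E → ℝ := fun p ↦ ∫ z, κ p.1 z * κ p.2 z ∂μ
  have hκx (x) : Integrable (κ x) μ :=
    .of_mem_Icc 0 1 hκ.of_uncurry_left.aemeasurable (ae_of_all _ (h01 x))
  have hκxy (x y) : Integrable (fun z ↦ κ x z * κ y z) μ :=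
    (hκx x).mul_bdd (c := 1) (hκx y).1 (ae_of_all _ fun z ↦ by
      simpa [abs_of_nonneg (h01 y z).1] using (h01 y z).2)
  have hJint : Integrable J (μ.prod μ) := (integrable_mul_kernel hκ h01 _).integral_prod_left
  have hJ0 (p) : 0 ≤ J p := integral_nonneg fun z ↦ mul_nonneg (h01 _ z).1 (h01 _ z).1
  have hJθ (p) : J p ≤ θ :=
    (integral_mono (hκxy _ _) (hκx _) fun z ↦
      mul_le_of_le_one_right (h01 _ z).1 (h01 _ z).2).trans_eq (hrow p.1)
  have hT (p : E × E) : ∫ z, (1 - κ p.1 z) * (1 - κ p.2 z) ∂μ = (1 - θ) ^ 2 + (J p - θ ^ 2) := by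
    rw [integral_one_sub_mul_one_sub (hκx _) (hκx _) (hκxy _ _), hrow, hrow]
    ring
  have hT0 (p : E × E) : 0 ≤ ∫ z, (1 - κ p.1 z) * (1 - κ p.2 z) ∂μ :=
    integral_nonneg fun z ↦ mul_nonneg (sub_nonneg.2 (h01 _ z).2) (sub_nonneg.2 (h01 _ z).2)
  calc ∫ p, (∫ z, (1 - κ p.1 z) * (1 - κ p.2 z) ∂μ) ^ (k + 1) ∂(μ.prod μ)
      ≤ ∫ p, ((1 - θ) ^ 2) ^ (k + 1) + (k + 1) * J p * (1 - θ) ^ k ∂(μ.prod μ) := by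
        refine integral_mono_of_nonneg (ae_of_all _ fun p ↦ pow_nonneg (hT0 p) _)
          ((integrable_const _).add ((hJint.const_mul _).mul_const _)) (ae_of_all _ fun p ↦ ?_)
        have := hT p
        have := hT0 p
        have := hJ0 p
        have := hJθ p
        refine pow_succ_le_pow_succ_add ⟨hT0 p, ?_⟩ ⟨sq_nonneg _, ?_⟩ (hJ0 p) ?_ k <;>
          nlinarith
    _ = _ := by
        rw [integral_add (integrable_const _) ((hJint.const_mul _).mul_const _),
          integral_mul_const, integral_const_mul, integral_integral_mul_eq_sq hκ h01 hcol]
        simp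

end Kernel

section SecondMoment

variable [IsProbabilityMeasure P]

lemma measureReal_eq_zero_mul_sq_le_variance {X : Ω → ℝ} (hX : MemLp X 2 P) :
    P.real {ω | X ω = 0} * P[X] ^ 2 ≤ variance X P := by
  rcases eq_or_ne P[X] 0 with h0 | h0
  · simp [h0, variance_nonneg]
  · have hsub : {ω | X ω = 0} ⊆ {ω | |P[X]| ≤ |X ω - P[X]|} := fun ω (hω : X ω = 0) ↦ by
      simp [hω]
    have hcheb : P.real {ω | X ω = 0} ≤ variance X P / |P[X]| ^ 2 :=
      ENNReal.toReal_le_of_le_ofReal (by positivity [variance_nonneg X P])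
        ((measure_mono hsub).trans (meas_ge_le_variance_div_sq hX (abs_pos.2 h0)))
    rwa [sq_abs, le_div_iff₀ (by positivity)] at hcheb

lemma covariance_indicator_one {A B : Set Ω} (hA : MeasurableSet A) (hB : MeasurableSet B) :
    cov[A.indicator 1, B.indicator 1; P] = P.real (A ∩ B) - P.real A * P.real B := by
  have hmem {C : Set Ω} (hC : MeasurableSet C) : MemLp (C.indicator (1 : Ω → ℝ)) 2 P :=
    memLp_indicator_const 2 hC 1 (by simp)
  rw [covariance_eq_sub (hmem hA) (hmem hB), ← inter_indicator_one,
    integral_indicator_one (hA.inter hB), integral_indicator_one hA, integral_indicator_one hB]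

lemma measureReal_biInter_compl_mul_sq_le {ι : Type*} {A : ι → Set Ω}
    (hA : ∀ i, MeasurableSet (A i)) (s : Finset ι) :
    P.real (⋂ i ∈ s, (A i)ᶜ) * (∑ i ∈ s, P.real (A i)) ^ 2 ≤
      ∑ i ∈ s, ∑ j ∈ s, (P.real (A i ∩ A j) - P.real (A i) * P.real (A j)) := by
  have hmem (i) : MemLp ((A i).indicator (1 : Ω → ℝ)) 2 P :=
    memLp_indicator_const 2 (hA i) 1 (by simp)
  set W : Ω → ℝ := fun ω ↦ ∑ i ∈ s, (A i).indicator 1 ω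
  have hW : ⋂ i ∈ s, (A i)ᶜ = {ω | W ω = 0} := by
    ext ω
    simp [W, Finset.sum_eq_zero_iff_of_nonneg, indicator_nonneg]
  have hmean : P[W] = ∑ i ∈ s, P.real (A i) := by
    rw [integral_finsetSum _ fun i _ ↦ (hmem i).integrable one_le_two]
    simp [hA]
  have hvar : variance W P =
      ∑ i ∈ s, ∑ j ∈ s, (P.real (A i ∩ A j) - P.real (A i) * P.real (A j)) := by
    simp only [W, variance_fun_sum' fun i _ ↦ hmem i]
    congr! with i _ j _
    exact covariance_indicator_one (hA i) (hA j)
  rw [hW, ← hmean, ← hvar]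
  exact measureReal_eq_zero_mul_sq_le_variance (memLp_finsetSum _ fun i _ ↦ hmem i)

lemma measureReal_biInter_compl_mul_card_sq_le {ι : Type*} {A : ι → Set Ω}
    (hA : ∀ i, MeasurableSet (A i)) {s : Finset ι} {p q : ℝ} (hp : ∀ i ∈ s, P.real (A i) = p)
    (hq : 0 ≤ q) (hpq : ∀ i ∈ s, ∀ j ∈ s, i ≠ j → P.real (A i ∩ A j) - p ^ 2 ≤ q) :
    P.real (⋂ i ∈ s, (A i)ᶜ) * (s.card * p) ^ 2 ≤ s.card * p + s.card ^ 2 * q := by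
  classical
  have hcov : ∀ i ∈ s, ∀ j ∈ s, P.real (A i ∩ A j) - P.real (A i) * P.real (A j) ≤
      (if i = j then p else 0) + q := by
    intro i hi j hj
    rw [hp i hi, hp j hj, ← sq]
    split_ifs with hij
    · rw [← hij, inter_self, hp i hi]
      linarith [sq_nonneg p]
    · linarith [hpq i hi j hj hij]
  calc P.real (⋂ i ∈ s, (A i)ᶜ) * (s.card * p) ^ 2
      = P.real (⋂ i ∈ s, (A i)ᶜ) * (∑ i ∈ s, P.real (A i)) ^ 2 := by
        rw [Finset.sum_congr rfl hp, Finset.sum_const, nsmul_eq_mul]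
    _ ≤ ∑ i ∈ s, ∑ j ∈ s, ((if i = j then p else 0) + q) :=
        (measureReal_biInter_compl_mul_sq_le hA s).trans
          (Finset.sum_le_sum fun i hi ↦ Finset.sum_le_sum fun j hj ↦ hcov i hi j hj)
    _ = s.card * p + s.card ^ 2 * q := by
        simp [Finset.sum_add_distrib]
        ring

end SecondMoment

section Torus

/-- The embedding of `ℤ ^ d` into `ℝ ^ d`; its range is the lattice of periods of the torus. -/
def intEmbedding (d : ℕ) : (Fin d → ℤ) →+ EuclideanSpace ℝ (Fin d) where
  toFun z := (WithLp.equiv 2 (Fin d → ℝ)).symm fun i ↦ (z i : ℝ)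
  map_zero' := by ext; simp
  map_add' z w := by ext; simp

instance : Countable (intEmbedding d).range :=
  (countable_range (intEmbedding d)).to_subtype

lemma torusDist_nonneg (x y : EuclideanSpace ℝ (Fin d)) : 0 ≤ torusDist x y :=
  Real.iInf_nonneg fun _ ↦ norm_nonneg _

lemma torusDist_le (x y : EuclideanSpace ℝ (Fin d)) (z : Fin d → ℤ) :
    torusDist x y ≤ ‖x - y - intEmbedding d z‖ :=
  ciInf_le ⟨0, forall_mem_range.2 fun _ ↦ norm_nonneg _⟩ z

lemma torusDist_comm (x y : EuclideanSpace ℝ (Fin d)) : torusDist x y = torusDist y x :=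
  (Equiv.neg (Fin d → ℤ)).iInf_congr fun z ↦ by
    rw [← norm_neg, Equiv.neg_apply]
    change ‖-(y - x - intEmbedding d (-z))‖ = ‖x - y - intEmbedding d z‖
    rw [map_neg]
    congr 1
    abel

lemma torusDist_eq_torusDist_zero_sub (x y : EuclideanSpace ℝ (Fin d)) :
    torusDist x y = torusDist 0 (y - x) := by
  simp [torusDist]

lemma torusDist_vadd_right (x y : EuclideanSpace ℝ (Fin d)) (v : (intEmbedding d).range) :
    torusDist x (v +ᵥ y) = torusDist x y := by
  obtain ⟨_, w, rfl⟩ := v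
  refine (Equiv.addRight w).iInf_congr fun z ↦ ?_
  change ‖x - y - intEmbedding d (z + w)‖ = ‖x - (intEmbedding d w + y) - intEmbedding d z‖
  rw [map_add]
  congr 1
  abel

lemma abs_le_abs_add_intCast {t : ℝ} (ht : |t| ≤ 1 / 2) (z : ℤ) : |t| ≤ |t + z| := by
  rcases eq_or_ne z 0 with rfl | hz
  · simp
  · have hz1 : (1 : ℝ) ≤ |(z : ℝ)| := mod_cast Int.one_le_abs hz
    have := abs_sub_abs_le_abs_sub (z : ℝ) (-t)
    rw [abs_neg, sub_neg_eq_add, add_comm (z : ℝ)] at this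
    linarith

lemma torusDist_zero_left {x : EuclideanSpace ℝ (Fin d)} (hx : x ∈ cube d) :
    torusDist 0 x = ‖x‖ := by
  refine le_antisymm ((torusDist_le 0 x 0).trans_eq (by simp)) (le_ciInf fun z ↦ ?_)
  rw [zero_sub, ← neg_add', norm_neg, EuclideanSpace.norm_eq, EuclideanSpace.norm_eq]
  refine Real.sqrt_le_sqrt (Finset.sum_le_sum fun i _ ↦ ?_)
  exact pow_le_pow_left₀ (norm_nonneg _)
    (abs_le_abs_add_intCast (abs_le.2 ⟨(hx i).1.le, (hx i).2⟩) (z i)) 2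

lemma measurable_torusDist : Measurable (Function.uncurry (torusDist (d := d))) :=
  Measurable.iInf fun _ ↦ ((measurable_fst.sub measurable_snd).sub_const _).norm

lemma cube_eq_preimage :
    cube d = WithLp.ofLp ⁻¹' univ.pi fun _ ↦ Ioc (-(1 / 2) : ℝ) (1 / 2) := by
  ext
  simp [cube]

lemma measurableSet_cube : MeasurableSet (cube d) := by
  rw [cube_eq_preimage]
  exact (MeasurableSet.univ_pi fun _ ↦ measurableSet_Ioc).preimage
    (PiLp.volume_preserving_ofLp (Fin d)).measurable

lemma volume_cube : volume (cube d) = 1 := by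
  rw [cube_eq_preimage, (PiLp.volume_preserving_ofLp (Fin d)).measure_preimage
    (MeasurableSet.univ_pi fun _ ↦ measurableSet_Ioc).nullMeasurableSet, Real.volume_pi_Ioc]
  norm_num

instance : IsProbabilityMeasure (volume.restrict (cube d)) := ⟨by simp [volume_cube]⟩

lemma existsUnique_intEmbedding_add_mem_cube (x : EuclideanSpace ℝ (Fin d)) :
    ∃! z, intEmbedding d z + x ∈ cube d := by
  have hcoord (i : Fin d) : ∃! k : ℤ, (k : ℝ) + x i ∈ Ioc (-(1 / 2) : ℝ) (1 / 2) := by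
    simpa only [zsmul_one, add_comm (x i), show (-(1 / 2) + 1 : ℝ) = 1 / 2 by norm_num] using
      existsUnique_add_zsmul_mem_Ioc one_pos (x i) (-(1 / 2) : ℝ)
  choose z hz huniq using hcoord
  exact ⟨z, hz, fun w hw ↦ funext fun i ↦ huniq i (w i) (hw i)⟩

lemma isAddFundamentalDomain_preimage_add_cube (x : EuclideanSpace ℝ (Fin d)) :
    IsAddFundamentalDomain (intEmbedding d).range ((· + x) ⁻¹' cube d) := by
  refine .mk' (measurableSet_cube.preimage (measurable_add_const x)).nullMeasurableSet fun y ↦ ?_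
  obtain ⟨z, hz, huniq⟩ := existsUnique_intEmbedding_add_mem_cube (y + x)
  refine ⟨⟨_, z, rfl⟩, ?_, ?_⟩
  · change intEmbedding d z + y + x ∈ cube d
    rwa [add_assoc]
  · rintro ⟨_, w, rfl⟩ (hw : intEmbedding d w + y + x ∈ cube d)
    rw [add_assoc] at hw
    simp only [huniq w hw]

lemma setIntegral_cube_comp_torusDist (f : ℝ → ℝ) (x : EuclideanSpace ℝ (Fin d)) :
    ∫ y in cube d, f (torusDist x y) = ∫ y in cube d, f ‖y‖ := by
  have hinv (v : (intEmbedding d).range) (y : EuclideanSpace ℝ (Fin d)) :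
      f (torusDist 0 (v +ᵥ y)) = f (torusDist 0 y) := by
    rw [torusDist_vadd_right]
  calc ∫ y in cube d, f (torusDist x y)
      = ∫ y in (· + x) ⁻¹' cube d, f (torusDist x (y + x)) :=
        ((measurePreserving_add_right volume x).setIntegral_preimage_emb
          (measurableEmbedding_addRight x) (fun y ↦ f (torusDist x y)) _).symm
    _ = ∫ y in (· + x) ⁻¹' cube d, f (torusDist 0 y) := by
        simp only [torusDist_eq_torusDist_zero_sub x, add_sub_cancel_right]
    _ = ∫ y in (· + 0) ⁻¹' cube d, f (torusDist 0 y) :=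
        (isAddFundamentalDomain_preimage_add_cube x).setIntegral_eq
          (isAddFundamentalDomain_preimage_add_cube 0) hinv
    _ = ∫ y in cube d, f ‖y‖ := by
        simp only [add_zero]
        exact setIntegral_congr_fun measurableSet_cube fun y hy ↦ by
          simp only [torusDist_zero_left hy]

end Torus

section Connection

/-- The probability that points at `x` and `y` are joined in the model with parameter `r`. -/
def connProb (M : Model d P) (r : ℝ) (x y : EuclideanSpace ℝ (Fin d)) : ℝ :=
  M.g (torusDist x y / r)

/-- The probability that a given point and a uniform point of the torus are joined in the model
with parameter `r`. By translation invariance it is enough to define it for a point at the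
origin. -/
def meanConn (M : Model d P) (r : ℝ) : ℝ :=
  ∫ z in cube d, M.g (‖z‖ / r)

lemma measurable_connProb (M : Model d P) {r : ℝ} (hr : 0 < r) :
    Measurable (Function.uncurry (connProb M r)) := by
  have hanti : Antitone fun t : ℝ ↦ M.g (max t 0) := fun a b hab ↦
    M.g_antitone (mem_Ici.2 (le_max_right a 0)) (mem_Ici.2 (le_max_right b 0))
      (max_le_max_right 0 hab)
  convert hanti.measurable.comp (measurable_torusDist.div_const r) using 1
  ext p
  have : 0 ≤ torusDist p.1 p.2 / r := div_nonneg (torusDist_nonneg _ _) hr.le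
  simp [connProb, Function.uncurry_def, this]

lemma connProb_mem_Icc (M : Model d P) {r : ℝ} (hr : 0 < r) (x y : EuclideanSpace ℝ (Fin d)) :
    connProb M r x y ∈ Icc (0 : ℝ) 1 :=
  M.g_mem _ (div_nonneg (torusDist_nonneg x y) hr.le)

lemma connProb_comm (M : Model d P) (r : ℝ) (x y : EuclideanSpace ℝ (Fin d)) :
    connProb M r x y = connProb M r y x := by
  rw [connProb, torusDist_comm, connProb]

lemma connProb_mono (M : Model d P) {r s : ℝ} (hr : 0 < r) (hrs : r ≤ s)
    (x y : EuclideanSpace ℝ (Fin d)) : connProb M r x y ≤ connProb M s x y :=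
  have hxy := torusDist_nonneg x y
  M.g_antitone (div_nonneg hxy (hr.le.trans hrs)) (div_nonneg hxy hr.le)
    (div_le_div_of_nonneg_left hxy hr hrs)

lemma setIntegral_connProb_left (M : Model d P) (r : ℝ) (x : EuclideanSpace ℝ (Fin d)) :
    ∫ y in cube d, connProb M r x y = meanConn M r :=
  setIntegral_cube_comp_torusDist (fun t ↦ M.g (t / r)) x

lemma setIntegral_connProb_right (M : Model d P) (r : ℝ) (y : EuclideanSpace ℝ (Fin d)) :
    ∫ x in cube d, connProb M r x y = meanConn M r := by
  simp only [connProb_comm M r _ y, setIntegral_connProb_left]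

lemma g_norm_div_nonneg (M : Model d P) {r : ℝ} (hr : 0 < r) (x : EuclideanSpace ℝ (Fin d)) :
    0 ≤ M.g (‖x‖ / r) :=
  (M.g_mem _ (div_nonneg (norm_nonneg x) hr.le)).1

lemma norm_inv_smul_eq_div {r : ℝ} (hr : 0 < r) (x : EuclideanSpace ℝ (Fin d)) :
    ‖r⁻¹ • x‖ = ‖x‖ / r := by
  rw [norm_smul, norm_inv, Real.norm_of_nonneg hr.le, div_eq_inv_mul]

lemma integrable_g_norm_div (M : Model d P) {r : ℝ} (hr : 0 < r) :
    Integrable fun x : EuclideanSpace ℝ (Fin d) ↦ M.g (‖x‖ / r) := by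
  simpa only [norm_inv_smul_eq_div hr] using M.g_integrable.comp_smul (inv_ne_zero hr.ne')

lemma integral_g_norm_div (M : Model d P) {r : ℝ} (hr : 0 < r) :
    ∫ x : EuclideanSpace ℝ (Fin d), M.g (‖x‖ / r) = M.α * r ^ d := by
  have := Measure.integral_comp_inv_smul_of_nonneg (volume : Measure (EuclideanSpace ℝ (Fin d)))
    (fun x ↦ M.g ‖x‖) hr.le
  simp only [norm_inv_smul_eq_div hr, ← M.α_def, finrank_euclideanSpace_fin, smul_eq_mul] at this
  rw [this, mul_comm]

lemma meanConn_nonneg (M : Model d P) {r : ℝ} (hr : 0 < r) : 0 ≤ meanConn M r :=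
  integral_nonneg fun x ↦ g_norm_div_nonneg M hr x

lemma meanConn_le (M : Model d P) {r : ℝ} (hr : 0 < r) : meanConn M r ≤ M.α * r ^ d :=
  (setIntegral_le_integral (integrable_g_norm_div M hr)
    (ae_of_all _ fun x ↦ g_norm_div_nonneg M hr x)).trans_eq (integral_g_norm_div M hr)

open scoped Pointwise in
lemma smul_cube_subset {r : ℝ} (hr : 0 < r) (hr1 : r ≤ 1) : r • cube d ⊆ cube d := by
  rintro _ ⟨x, hx, rfl⟩ i
  have := hx i
  simp only [PiLp.smul_apply, smul_eq_mul]
  constructor <;> nlinarith [this.1, this.2]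

lemma pow_mul_meanConn_one_le (M : Model d P) {r : ℝ} (hr : 0 < r) (hr1 : r ≤ 1) :
    r ^ d * meanConn M 1 ≤ meanConn M r := by
  have hscale := Measure.setIntegral_comp_smul_of_pos (volume : Measure (EuclideanSpace ℝ (Fin d)))
    (fun x ↦ M.g (‖x‖ / r)) (cube d) hr
  simp only [norm_smul, Real.norm_of_nonneg hr.le, mul_div_cancel_left₀ _ hr.ne',
    finrank_euclideanSpace_fin, smul_eq_mul] at hscale
  rw [meanConn]
  simp only [div_one]
  rw [hscale, mul_inv_cancel_left₀ (pow_pos hr d).ne']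
  exact setIntegral_mono_set (integrable_g_norm_div M hr).integrableOn
    (ae_of_all _ fun x ↦ g_norm_div_nonneg M hr x) (smul_cube_subset hr hr1).eventuallyLE

lemma exists_pos_g_pos (hd : d ≠ 0) (M : Model d P) : ∃ t, 0 < t ∧ 0 < M.g t := by
  have : Nonempty (Fin d) := Fin.pos_iff_nonempty.1 (Nat.pos_of_ne_zero hd)
  by_contra! h
  have hg : (fun x : EuclideanSpace ℝ (Fin d) ↦ M.g ‖x‖) =ᵐ[volume] 0 := by
    filter_upwards [compl_mem_ae_iff.2 (measure_singleton 0)] with x hx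
    exact le_antisymm (h _ (norm_pos_iff.2 hx)) (M.g_mem _ (norm_nonneg x)).1
  exact M.α_pos.ne' (by rw [M.α_def, integral_congr_ae hg]; simp)

lemma ball_half_subset_cube : Metric.ball 0 (1 / 2) ⊆ cube d := fun x hx i ↦ by
  have := abs_lt.1 ((PiLp.norm_apply_le x i).trans_lt (mem_ball_zero_iff.1 hx))
  exact ⟨this.1, this.2.le⟩

lemma meanConn_one_pos (hd : d ≠ 0) (M : Model d P) : 0 < meanConn M 1 := by
  obtain ⟨t, ht, hgt⟩ := exists_pos_g_pos hd M
  set B := Metric.ball (0 : EuclideanSpace ℝ (Fin d)) (min t (1 / 2))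
  have hB : B ⊆ cube d :=
    (Metric.ball_subset_ball (min_le_right _ _)).trans ball_half_subset_cube
  have hint : IntegrableOn (fun x : EuclideanSpace ℝ (Fin d) ↦ M.g (‖x‖ / 1)) (cube d) :=
    (integrable_g_norm_div M one_pos).integrableOn
  rw [meanConn, setIntegral_pos_iff_support_of_nonneg_ae
    (ae_of_all _ fun x ↦ g_norm_div_nonneg M one_pos x) hint]
  refine (Metric.measure_ball_pos volume 0 (by positivity)).trans_le
    (measure_mono (subset_inter (fun x hx ↦ ?_) hB))
  have hxt : ‖x‖ ≤ t := (mem_ball_zero_iff.1 hx).le.trans (min_le_left _ _)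
  rw [Function.mem_support, div_one]
  exact (hgt.trans_le (M.g_antitone (norm_nonneg x) ht.le hxt)).ne'

end Connection

section Avoidance

/-- The event that vertex `i + 1` is joined to none of the vertices `j + 1` with `j ∈ F`. Vertices
are shifted by one because those of the model are numbered from `1`. -/
def avoid (M : Model d P) (r : ℝ) (i : ℕ) (F : Finset ℕ) : Set Ω :=
  {ω | ∀ j ∈ F, connProb M r (M.X (i + 1) ω) (M.X (j + 1) ω) <
    M.U (min i j + 1) (max i j + 1) ω}

lemma avoid_anti (M : Model d P) (r : ℝ) (i : ℕ) {F G : Finset ℕ} (h : F ⊆ G) :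
    avoid M r i G ⊆ avoid M r i F :=
  fun _ hω j hj ↦ hω j (h hj)

lemma avoid_subset_of_le (M : Model d P) {r s : ℝ} (hr : 0 < r) (hrs : r ≤ s) (i : ℕ)
    (F : Finset ℕ) : avoid M s i F ⊆ avoid M r i F :=
  fun _ hω j hj ↦ (connProb_mono M hr hrs _ _).trans_lt (hω j hj)

lemma measurable_connProb_comp {E : Type*} [MeasurableSpace E] (M : Model d P) {r : ℝ}
    (hr : 0 < r) {f h : E → EuclideanSpace ℝ (Fin d)} (hf : Measurable f) (hh : Measurable h) :
    Measurable fun a ↦ connProb M r (f a) (h a) := by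
  simpa only [Function.comp_def, Function.uncurry_apply_pair] using
    (measurable_connProb M hr).comp (hf.prodMk hh)

lemma measurableSet_avoid (M : Model d P) {r : ℝ} (hr : 0 < r) (i : ℕ) (F : Finset ℕ) :
    MeasurableSet (avoid M r i F) := by
  simp only [avoid, ofPred_forall]
  exact Finset.measurableSet_biInter _ fun j _ ↦
    measurableSet_lt (measurable_connProb_comp M hr (M.X_meas _) (M.X_meas _)) (M.U_meas _ _)

lemma indepFun_X_U (M : Model d P) {ι : Type*} (e : ι → ℕ × ℕ) :
    IndepFun (fun ω i ↦ M.X i ω) (fun ω q ↦ M.U (e q).1 (e q).2 ω) P := by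
  have h : IndepFun (fun ω i ↦ M.X i ω) (fun ω (p : ℕ × ℕ) ↦ M.U p.1 p.2 ω) P := by
    rw [IndepFun_iff_Indep]
    exact M.families_indep.indep (i := 0) (j := 2) (by decide)
  exact h.comp measurable_id
    (by fun_prop : Measurable fun (u : ℕ × ℕ → ℝ) (q : ι) ↦ u (e q))

lemma iIndepFun_U_of_disjoint (M : Model d P) {T F : Finset ℕ} (hTF : Disjoint T F) :
    iIndepFun (fun q : T × F ↦ M.U (min (q.1 : ℕ) q.2 + 1) (max (q.1 : ℕ) q.2 + 1)) P := by
  have hne (i : T) (j : F) : (i : ℕ) ≠ j := fun h ↦ Finset.disjoint_left.1 hTF i.2 (h ▸ j.2)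
  refine M.U_indep.precomp (g := fun q : T × F ↦
    ⟨(min (q.1 : ℕ) q.2 + 1, max (q.1 : ℕ) q.2 + 1), by grind⟩) fun q q' h ↦ ?_
  simp only [Subtype.mk.injEq, Prod.mk.injEq] at h
  have := hne q.1 q'.2
  have hval : (q.1 : ℕ) = q'.1 ∧ (q.2 : ℕ) = q'.2 := by omega
  exact Prod.ext (Subtype.ext hval.1) (Subtype.ext hval.2)

lemma iIndepFun_X_succ (M : Model d P) : iIndepFun (fun i ↦ M.X (i + 1)) P :=
  M.X_indep.precomp (g := fun i : ℕ ↦ ⟨i + 1, Nat.le_add_left 1 i⟩) fun i j h ↦ by simpa using h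

variable [IsProbabilityMeasure P]

lemma integral_prod_comp_eq_integral_prod_integral {ι β γ : Type*} [Fintype ι]
    [MeasurableSpace β] [MeasurableSpace γ] {Y : Ω → β} {Z : ι → Ω → γ}
    (hYZ : IndepFun Y (fun ω q ↦ Z q ω) P) (hZ : iIndepFun Z P) (hYm : Measurable Y)
    (hZm : ∀ q, Measurable (Z q)) {f : ι → β → γ → ℝ}
    (hf : ∀ q, Measurable (Function.uncurry (f q))) (hf01 : ∀ q y z, f q y z ∈ Icc (0 : ℝ) 1) :
    ∫ ω, ∏ q, f q (Y ω) (Z q ω) ∂P = ∫ ω, ∏ q, ∫ z, f q (Y ω) z ∂(P.map (Z q)) ∂P := by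
  have _ (q) : IsProbabilityMeasure (P.map (Z q)) :=
    Measure.isProbabilityMeasure_map (hZm q).aemeasurable
  have _ : IsProbabilityMeasure (P.map Y) :=
    Measure.isProbabilityMeasure_map hYm.aemeasurable
  have hlaw : P.map (fun ω ↦ (Y ω, fun q ↦ Z q ω)) =
      (P.map Y).prod (Measure.pi fun q ↦ P.map (Z q)) := by
    rw [hYZ.map_prod_eq_prod_map_map hYm.aemeasurable (by fun_prop),
      (iIndepFun_iff_map_fun_eq_pi_map fun q ↦ (hZm q).aemeasurable).1 hZ]
  have hFm : Measurable fun p : β × (ι → γ) ↦ ∏ q, f q p.1 (p.2 q) :=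
    Finset.measurable_prod _ fun q _ ↦
      (hf q).comp (by fun_prop : Measurable fun p : β × (ι → γ) ↦ (p.1, p.2 q))
  have hGm : AEStronglyMeasurable (fun y ↦ ∏ q, ∫ z, f q y z ∂(P.map (Z q))) (P.map Y) :=
    (Finset.stronglyMeasurable_fun_prod _ fun q _ ↦
      (hf q).stronglyMeasurable.integral_prod_right).aestronglyMeasurable
  have hFint : Integrable (fun p : β × (ι → γ) ↦ ∏ q, f q p.1 (p.2 q))
      ((P.map Y).prod (Measure.pi fun q ↦ P.map (Z q))) :=
    .of_mem_Icc 0 1 hFm.aemeasurable (ae_of_all _ fun p ↦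
      ⟨Finset.prod_nonneg fun q _ ↦ (hf01 _ _ _).1,
        Finset.prod_le_one (fun q _ ↦ (hf01 _ _ _).1) fun q _ ↦ (hf01 _ _ _).2⟩)
  calc ∫ ω, ∏ q, f q (Y ω) (Z q ω) ∂P
      = ∫ p, ∏ q, f q p.1 (p.2 q) ∂((P.map Y).prod (Measure.pi fun q ↦ P.map (Z q))) := by
        rw [← hlaw, integral_map (by fun_prop) hFm.aestronglyMeasurable]
    _ = ∫ y, ∏ q, ∫ z, f q y z ∂(P.map (Z q)) ∂(P.map Y) := by
        rw [integral_prod _ hFint]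
        congr! 2 with y
        exact integral_fintype_prod_eq_prod fun q ↦ f q y
    _ = ∫ ω, ∏ q, ∫ z, f q (Y ω) z ∂(P.map (Z q)) ∂P :=
        integral_map hYm.aemeasurable hGm

lemma setIntegral_Icc_ite_lt {a : ℝ} (ha : a ∈ Icc (0 : ℝ) 1) :
    ∫ u in Icc (0 : ℝ) 1, (if a < u then 1 else 0 : ℝ) = 1 - a := by
  have hIoc : Icc (0 : ℝ) 1 ∩ Ioi a = Ioc a 1 := by
    ext u
    simp only [mem_inter_iff, mem_Icc, mem_Ioi, mem_Ioc]
    exact ⟨fun h ↦ ⟨h.2, h.1.2⟩, fun h ↦ ⟨⟨ha.1.trans h.1.le, h.2⟩, h.1⟩⟩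
  calc ∫ u in Icc (0 : ℝ) 1, (if a < u then 1 else 0 : ℝ)
      = ∫ u in Icc (0 : ℝ) 1, (Ioi a).indicator 1 u := by
        congr! 2 with u
    _ = 1 - a := by
        rw [setIntegral_indicator measurableSet_Ioi, hIoc]
        simp [ha.2]

lemma measureReal_biInter_avoid_eq_integral_prod (M : Model d P) {r : ℝ} (hr : 0 < r)
    {T F : Finset ℕ} (hTF : Disjoint T F) :
    P.real (⋂ i ∈ T, avoid M r i F) =
      ∫ ω, ∏ q : T × F, (1 - connProb M r (M.X (q.1 + 1) ω) (M.X (q.2 + 1) ω)) ∂P := by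
  have hmeas : MeasurableSet (⋂ i ∈ T, avoid M r i F) :=
    Finset.measurableSet_biInter _ fun i _ ↦ measurableSet_avoid M hr i F
  have hunif (q : T × F) : P.map (M.U (min (q.1 : ℕ) q.2 + 1) (max (q.1 : ℕ) q.2 + 1)) =
      volume.restrict (Icc 0 1) :=
    M.U_unif _ _ (by omega) (by
      have : (q.1 : ℕ) ≠ q.2 := fun h ↦ Finset.disjoint_left.1 hTF q.1.2 (h ▸ q.2.2)
      omega)
  set f : T × F → (ℕ → EuclideanSpace ℝ (Fin d)) → ℝ → ℝ := fun q x u ↦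
    if connProb M r (x (q.1 + 1)) (x (q.2 + 1)) < u then 1 else 0
  have hf (q) : Measurable (Function.uncurry (f q)) :=
    .ite (measurableSet_lt (measurable_connProb_comp M hr (by fun_prop) (by fun_prop))
      measurable_snd) measurable_const measurable_const
  calc P.real (⋂ i ∈ T, avoid M r i F)
      = ∫ ω, ∏ q : T × F, f q (fun i ↦ M.X i ω)
          (M.U (min (q.1 : ℕ) q.2 + 1) (max (q.1 : ℕ) q.2 + 1) ω) ∂P := by
        rw [← integral_indicator_one hmeas]
        congr! 2 with ω
        classical simp [f, Finset.prod_boole, indicator_apply, avoid, Prod.forall]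
    _ = ∫ ω, ∏ q : T × F, ∫ u, f q (fun i ↦ M.X i ω) u ∂(volume.restrict (Icc 0 1)) ∂P := by
        rw [integral_prod_comp_eq_integral_prod_integral (indepFun_X_U M fun q : T × F ↦
            (min (q.1 : ℕ) q.2 + 1, max (q.1 : ℕ) q.2 + 1))
          (iIndepFun_U_of_disjoint M hTF) (measurable_pi_lambda _ M.X_meas)
          (fun q ↦ M.U_meas _ _) hf fun q x u ↦ by dsimp only [f]; split_ifs <;> simp]
        simp only [hunif]
    _ = ∫ ω, ∏ q : T × F, (1 - connProb M r (M.X (q.1 + 1) ω) (M.X (q.2 + 1) ω)) ∂P := by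
        simp only [f, setIntegral_Icc_ite_lt (connProb_mem_Icc M hr _ _)]

lemma measureReal_biInter_avoid (M : Model d P) {r : ℝ} (hr : 0 < r) {T F : Finset ℕ}
    (hTF : Disjoint T F) :
    P.real (⋂ i ∈ T, avoid M r i F) =
      ∫ ω, (∫ z in cube d, ∏ i ∈ T, (1 - connProb M r (M.X (i + 1) ω) z)) ^ F.card ∂P := by
  have hXm (i : ℕ) : Measurable (M.X (i + 1)) := M.X_meas _
  have h01 (x z) : 1 - connProb M r x z ∈ Icc (0 : ℝ) 1 :=
    Icc.one_sub_mem (connProb_mem_Icc M hr x z)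
  set f : F → (T → EuclideanSpace ℝ (Fin d)) → EuclideanSpace ℝ (Fin d) → ℝ :=
    fun _ x z ↦ ∏ i, (1 - connProb M r (x i) z)
  have hf (j) : Measurable (Function.uncurry (f j)) :=
    Finset.measurable_prod _ fun i _ ↦
      measurable_const.sub (measurable_connProb_comp M hr (by fun_prop) measurable_snd)
  calc P.real (⋂ i ∈ T, avoid M r i F)
      = ∫ ω, ∏ j : F, f j (fun i ↦ M.X (i + 1) ω) (M.X (j + 1) ω) ∂P := by
        simp only [measureReal_biInter_avoid_eq_integral_prod M hr hTF,
          Fintype.prod_prod_type_right, f]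
    _ = ∫ ω, ∏ j : F, (∫ z in cube d, f j (fun i ↦ M.X (i + 1) ω) z) ∂P := by
        rw [integral_prod_comp_eq_integral_prod_integral
          ((iIndepFun_X_succ M).indepFun_finset T F hTF hXm)
          ((iIndepFun_X_succ M).precomp Subtype.val_injective) (by fun_prop) (fun j ↦ hXm j) hf
          fun j x z ↦ ⟨Finset.prod_nonneg fun i _ ↦ (h01 _ _).1,
            Finset.prod_le_one (fun i _ ↦ (h01 _ _).1) fun i _ ↦ (h01 _ _).2⟩]
        simp only [M.X_unif _ (Nat.le_add_left 1 _)]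
    _ = _ := by
        have hprod (ω z) : ∏ i : T, (1 - connProb M r (M.X (i + 1) ω) z) =
            ∏ i ∈ T, (1 - connProb M r (M.X (i + 1) ω) z) :=
          Finset.prod_coe_sort T fun i ↦ 1 - connProb M r (M.X (i + 1) ω) z
        simp only [f, hprod, Finset.prod_const, Finset.card_univ, Fintype.card_coe]

lemma measureReal_avoid (M : Model d P) {r : ℝ} (hr : 0 < r) {i : ℕ} {F : Finset ℕ}
    (hi : i ∉ F) : P.real (avoid M r i F) = (1 - meanConn M r) ^ F.card := by
  have hint (x) : Integrable (connProb M r x) (volume.restrict (cube d)) :=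
    .of_mem_Icc 0 1 (measurable_connProb_comp M hr measurable_const measurable_id).aemeasurable
      (ae_of_all _ fun z ↦ connProb_mem_Icc M hr x z)
  have hinner (x) : ∫ z in cube d, (1 - connProb M r x z) = 1 - meanConn M r := by
    rw [integral_sub (integrable_const 1) (hint x), setIntegral_connProb_left]
    simp
  simpa [hinner] using measureReal_biInter_avoid M hr (Finset.disjoint_singleton_left.2 hi)

lemma measureReal_avoid_inter_avoid (M : Model d P) {r : ℝ} (hr : 0 < r) {i j : ℕ}
    (hij : i ≠ j) {F : Finset ℕ} (hi : i ∉ F) (hj : j ∉ F) :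
    P.real (avoid M r i F ∩ avoid M r j F) =
      ∫ p, (∫ z in cube d, (1 - connProb M r p.1 z) * (1 - connProb M r p.2 z)) ^ F.card
        ∂((volume.restrict (cube d)).prod (volume.restrict (cube d))) := by
  have hdisj : Disjoint {i, j} F := by simp [Finset.disjoint_insert_left, hi, hj]
  have hlaw : P.map (fun ω ↦ (M.X (i + 1) ω, M.X (j + 1) ω)) =
      (volume.restrict (cube d)).prod (volume.restrict (cube d)) := by
    rw [((iIndepFun_X_succ M).indepFun hij).map_prod_eq_prod_map_map (M.X_meas _).aemeasurable
      (M.X_meas _).aemeasurable, M.X_unif _ (by omega), M.X_unif _ (by omega)]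
  have hmeas : StronglyMeasurable fun p : EuclideanSpace ℝ (Fin d) × EuclideanSpace ℝ (Fin d) ↦
      (∫ z in cube d, (1 - connProb M r p.1 z) * (1 - connProb M r p.2 z)) ^ F.card := by
    refine .pow (.integral_prod_right (Measurable.stronglyMeasurable ?_)) _
    exact (measurable_const.sub (measurable_connProb_comp M hr (by fun_prop) measurable_snd)).mul
      (measurable_const.sub (measurable_connProb_comp M hr (by fun_prop) measurable_snd))
  rw [← hlaw, integral_map ((M.X_meas _).prodMk (M.X_meas _)).aemeasurable
    hmeas.aestronglyMeasurable]
  simpa [Finset.prod_pair hij, Finset.set_biInter_insert] using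
    measureReal_biInter_avoid M hr hdisj

end Avoidance

section NoneIsolated

lemma deg_eq_zero_iff {M : Model d P} {n : ℕ} {r : ℝ} {ω : Ω} {i : ℕ} :
    deg M n r ω i = 0 ↔ ∀ j, ¬ adj M n r ω i j := by
  have hfin : {j : ℕ | adj M n r ω i j}.Finite :=
    (finite_Iic (M.N n ω)).subset fun j hj ↦ hj.2.2.2.2.1
  rw [deg, ncard_eq_zero hfin, eq_empty_iff_forall_notMem]
  rfl

lemma deg_succ_eq_zero_iff {M : Model d P} {n : ℕ} {r : ℝ} {ω : Ω} {i : ℕ} (hi : i < M.N n ω) :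
    deg M n r ω (i + 1) = 0 ↔ ω ∈ avoid M r i ((Finset.range (M.N n ω)).erase i) := by
  rw [deg_eq_zero_iff]
  refine ⟨fun h j hj ↦ not_le.1 fun hle ↦ h (j + 1) ?_, ?_⟩
  · have hj := Finset.mem_erase.1 hj
    have hjN := Finset.mem_range.1 hj.2
    refine ⟨by omega, by omega, by omega, by omega, by omega, ?_⟩
    rwa [min_add_add_right, max_add_add_right]
  · rintro h (_ | j) ⟨hij, -, hj1, -, hjN, hle⟩
    · omega
    · rw [min_add_add_right, max_add_add_right] at hle
      exact (h j (by grind)).not_ge hle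

/-- The event that none of the vertices `1, …, m` is isolated when the vertex set is
`{1, …, K}`. -/
def noneIsolated (M : Model d P) (r : ℝ) (m K : ℕ) : Set Ω :=
  ⋂ i ∈ Finset.range m, (avoid M r i ((Finset.range K).erase i))ᶜ

lemma isolatedCount_eq_zero_iff {M : Model d P} {n : ℕ} {r : ℝ} {ω : Ω} :
    isolatedCount M n r ω = 0 ↔ ω ∈ noneIsolated M r (M.N n ω) (M.N n ω) := by
  have hfin : {i : ℕ | 1 ≤ i ∧ i ≤ M.N n ω ∧ deg M n r ω i = 0}.Finite :=
    (finite_Iic (M.N n ω)).subset fun j hj ↦ hj.2.1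
  simp only [isolatedCount, ncard_eq_zero hfin, eq_empty_iff_forall_notMem, noneIsolated,
    mem_iInter₂, Finset.mem_range, mem_compl_iff]
  refine ⟨fun h i hi hav ↦ h (i + 1) ⟨by omega, hi, (deg_succ_eq_zero_iff hi).2 hav⟩, ?_⟩
  rintro h (_ | i) ⟨hi1, hiN, hdeg⟩
  · omega
  · exact h i hiN ((deg_succ_eq_zero_iff hiN).1 hdeg)

lemma noneIsolated_subset {M : Model d P} {r r' : ℝ} {m m' K K' : ℕ} (hr : 0 < r) (hrr' : r ≤ r')
    (hm : m' ≤ m) (hK : K ≤ K') : noneIsolated M r m K ⊆ noneIsolated M r' m' K' := by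
  refine biInter_mono (fun i hi ↦ Finset.range_subset_range.2 hm hi) fun i _ ↦
    compl_subset_compl.2 ?_
  exact (avoid_subset_of_le M hr hrr' i _).trans
    (avoid_anti M r i (Finset.erase_subset_erase _ (Finset.range_subset_range.2 hK)))

lemma critRadius_nonneg (M : Model d P) (n : ℕ) (ω : Ω) : 0 ≤ critRadius M n ω :=
  Real.sInf_nonneg fun _ hr ↦ hr.1.le

lemma critRadius_le {M : Model d P} {n : ℕ} {ω : Ω} {r : ℝ} (hr : 0 < r)
    (h : isolatedCount M n r ω = 0) : critRadius M n ω ≤ r :=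
  csInf_le ⟨0, fun _ hs ↦ hs.1.le⟩ ⟨hr, h⟩

lemma le_critRadius {M : Model d P} {n m K : ℕ} {ω : Ω} {r R : ℝ} (hr : 0 < r)
    (h : isolatedCount M n r ω = 0) (hm : m ≤ M.N n ω) (hK : M.N n ω ≤ K)
    (hR : ω ∉ noneIsolated M R m K) : R ≤ critRadius M n ω :=
  le_csInf ⟨r, hr, h⟩ fun _ hs ↦ le_of_not_gt fun hlt ↦
    hR (noneIsolated_subset hs.1 hlt.le hm hK (isolatedCount_eq_zero_iff.1 hs.2))

variable [IsProbabilityMeasure P]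

lemma meanConn_le_one (M : Model d P) {r : ℝ} (hr : 0 < r) : meanConn M r ≤ 1 := by
  have havoid := measureReal_avoid M hr (i := 0) (F := {1}) (by simp)
  rw [Finset.card_singleton, pow_one] at havoid
  linarith [measureReal_nonneg (μ := P) (s := avoid M r 0 {1})]

lemma measureReal_compl_noneIsolated_le (M : Model d P) {r : ℝ} (hr : 0 < r) (m K : ℕ) :
    P.real (noneIsolated M r m (K + 1))ᶜ ≤ m * Real.exp (-(K * meanConn M r)) := by
  have hθ := meanConn_le_one M hr
  have havoid (i : ℕ) : P.real (avoid M r i ((Finset.range (K + 1)).erase i)) ≤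
      Real.exp (-(K * meanConn M r)) := by
    have hcard : K ≤ ((Finset.range (K + 1)).erase i).card := by
      simpa using Finset.pred_card_le_card_erase (s := Finset.range (K + 1)) (a := i)
    calc P.real (avoid M r i ((Finset.range (K + 1)).erase i))
        = (1 - meanConn M r) ^ ((Finset.range (K + 1)).erase i).card :=
          measureReal_avoid M hr (Finset.notMem_erase i _)
      _ ≤ (1 - meanConn M r) ^ K :=
          pow_le_pow_of_le_one (by linarith) (by linarith [meanConn_nonneg M hr]) hcard
      _ ≤ Real.exp (-meanConn M r) ^ K :=
          pow_le_pow_left₀ (by linarith) (Real.one_sub_le_exp_neg _) K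
      _ = Real.exp (-(K * meanConn M r)) := by rw [← Real.exp_nat_mul, mul_neg]
  calc P.real (noneIsolated M r m (K + 1))ᶜ
      = P.real (⋃ i ∈ Finset.range m, avoid M r i ((Finset.range (K + 1)).erase i)) := by
        simp only [noneIsolated, compl_iInter, compl_compl]
    _ ≤ ∑ i ∈ Finset.range m, P.real (avoid M r i ((Finset.range (K + 1)).erase i)) :=
        measureReal_biUnion_finset_le _ _
    _ ≤ m * Real.exp (-(K * meanConn M r)) := by
        simpa using Finset.sum_le_card_nsmul (Finset.range m) _ _ fun i _ ↦ havoid i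

lemma measureReal_avoid_inter_avoid_erase_le (M : Model d P) {r : ℝ} (hr : 0 < r) {i j k : ℕ}
    (hij : i ≠ j) (hi : i < k + 3) (hj : j < k + 3) :
    P.real (avoid M r i ((Finset.range (k + 3)).erase i) ∩
        avoid M r j ((Finset.range (k + 3)).erase j)) ≤
      ((1 - meanConn M r) ^ 2) ^ (k + 1) +
        (k + 1) * meanConn M r ^ 2 * (1 - meanConn M r) ^ k := by
  set F := ((Finset.range (k + 3)).erase i).erase j
  have hcard : F.card = k + 1 := by
    simp [F, Finset.card_erase_of_mem, hi, hj, hij.symm]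
  have hsub : avoid M r i ((Finset.range (k + 3)).erase i) ∩
      avoid M r j ((Finset.range (k + 3)).erase j) ⊆ avoid M r i F ∩ avoid M r j F :=
    inter_subset_inter (avoid_anti M r i (Finset.erase_subset _ _))
      (avoid_anti M r j (Finset.erase_subset_erase _ (Finset.erase_subset _ _)))
  refine (measureReal_mono hsub).trans ?_
  rw [measureReal_avoid_inter_avoid M hr hij (by simp [F]) (by simp [F]), hcard]
  exact integral_joint_one_sub_pow_le (measurable_connProb M hr) (connProb_mem_Icc M hr)
    (setIntegral_connProb_left M r) (setIntegral_connProb_right M r) k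

lemma measureReal_noneIsolated_mul_sq_le (M : Model d P) {r : ℝ} (hr : 0 < r) {m k : ℕ}
    (hm : m ≤ k + 3) :
    P.real (noneIsolated M r m (k + 3)) * (m * (1 - meanConn M r) ^ (k + 2)) ^ 2 ≤
      m * (1 - meanConn M r) ^ (k + 2) + m ^ 2 * (((1 - meanConn M r) ^ 2) ^ (k + 1) +
        (k + 1) * meanConn M r ^ 2 * (1 - meanConn M r) ^ k -
          ((1 - meanConn M r) ^ (k + 2)) ^ 2) := by
  have hmem {i} (hi : i ∈ Finset.range m) : i < k + 3 := (Finset.mem_range.1 hi).trans_le hm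
  have hu : 0 ≤ 1 - meanConn M r := sub_nonneg.2 (meanConn_le_one M hr)
  have hq : 0 ≤ (k + 1) * meanConn M r ^ 2 * (1 - meanConn M r) ^ k := by positivity
  have hp : ((1 - meanConn M r) ^ (k + 2)) ^ 2 ≤ ((1 - meanConn M r) ^ 2) ^ (k + 1) := by
    rw [← pow_mul, ← pow_mul]
    exact pow_le_pow_of_le_one hu (sub_le_self 1 (meanConn_nonneg M hr)) (by omega)
  have hsingle (i) (hi : i ∈ Finset.range m) :
      P.real (avoid M r i ((Finset.range (k + 3)).erase i)) = (1 - meanConn M r) ^ (k + 2) := by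
    rw [measureReal_avoid M hr (Finset.notMem_erase i _)]
    simp [Finset.card_erase_of_mem, hmem hi]
  simpa only [noneIsolated, Finset.card_range] using measureReal_biInter_compl_mul_card_sq_le
    (fun i ↦ measurableSet_avoid M hr i ((Finset.range (k + 3)).erase i)) hsingle
    (by linarith) fun i hi j hj hij ↦ sub_le_sub_right
      (measureReal_avoid_inter_avoid_erase_le M hr hij (hmem hi) (hmem hj)) _

lemma measureReal_noneIsolated_mul_pow_le (M : Model d P) {r : ℝ} (hr : 0 < r) {m K : ℕ}
    (hm : 0 < m) (hmK : m ≤ K) (hK : 3 ≤ K) :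
    P.real (noneIsolated M r m K) * (1 - meanConn M r) ^ (K + 1) ≤
      1 / m + 2 * meanConn M r + K * meanConn M r ^ 2 := by
  obtain ⟨k, rfl⟩ := Nat.exists_eq_add_of_le' hK
  have hsq := measureReal_noneIsolated_mul_sq_le M hr hmK
  have hθ0 : 0 ≤ meanConn M r := meanConn_nonneg M hr
  have hθ1 : meanConn M r ≤ 1 := meanConn_le_one M hr
  have : (0 : ℝ) < m := Nat.cast_pos.2 hm
  generalize P.real (noneIsolated M r m (k + 3)) = S at hsq ⊢
  generalize meanConn M r = θ at *
  obtain ⟨u, rfl⟩ : ∃ u, θ = 1 - u := ⟨1 - θ, by ring⟩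
  rw [sub_sub_cancel] at *
  obtain rfl | hu0 : u = 0 ∨ 0 < u := (show 0 ≤ u by linarith).eq_or_lt'
  · rw [zero_pow (Nat.succ_ne_zero _), mul_zero]
    positivity
  have hu2 : u ^ 2 ≤ 1 := pow_le_one₀ hu0.le (by linarith)
  have hcancel : S * u ^ (k + 4) ≤ u ^ 2 / m + u ^ k * (u ^ 2 - u ^ 4) + (k + 1) * (1 - u) ^ 2 := by
    refine le_of_mul_le_mul_left ?_ (by positivity : 0 < m ^ 2 * u ^ k)
    calc m ^ 2 * u ^ k * (S * u ^ (k + 4)) = S * (m * u ^ (k + 2)) ^ 2 := by ring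
      _ ≤ _ := hsq
      _ = m ^ 2 * u ^ k * (u ^ 2 / m + u ^ k * (u ^ 2 - u ^ 4) + (k + 1) * (1 - u) ^ 2) := by
        field_simp
        ring
  calc S * u ^ (k + 3 + 1) ≤ u ^ 2 / m + u ^ k * (u ^ 2 - u ^ 4) + (k + 1) * (1 - u) ^ 2 := hcancel
    _ ≤ 1 / m + 2 * (1 - u) + (k + 3 : ℕ) * (1 - u) ^ 2 := by
      have hdiv : u ^ 2 / m ≤ 1 / m := by gcongr
      have hdiff : u ^ k * (u ^ 2 - u ^ 4) ≤ 2 * (1 - u) :=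
        calc u ^ k * (u ^ 2 - u ^ 4) ≤ 1 * (u ^ 2 - u ^ 4) :=
              mul_le_mul_of_nonneg_right (pow_le_one₀ hu0.le (by linarith)) (by nlinarith)
          _ ≤ 2 * (1 - u) := by nlinarith [sq_nonneg (1 - u)]
      push_cast
      nlinarith [sq_nonneg (1 - u)]

end NoneIsolated

section Poisson

lemma integrable_exp_mul_poissonMeasure (r : NNReal) (s : ℝ) :
    Integrable (fun k : ℕ ↦ Real.exp (s * k)) (poissonMeasure r) := by
  rw [integrable_poissonMeasure_iff]
  refine ((Real.summable_pow_div_factorial (r * Real.exp s)).mul_left (Real.exp (-r))).congr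
    fun k ↦ ?_
  rw [Real.norm_of_nonneg (Real.exp_nonneg _), mul_comm s, Real.exp_nat_mul]
  ring

lemma mgf_poissonMeasure (r : NNReal) (s : ℝ) :
    mgf (fun k : ℕ ↦ (k : ℝ)) (poissonMeasure r) s = Real.exp (r * (Real.exp s - 1)) := by
  have hexp := (NormedSpace.expSeries_div_hasSum_exp (r * Real.exp s)).mul_left (Real.exp (-r))
  rw [← Real.exp_eq_exp_ℝ, ← Real.exp_add] at hexp
  have hmgf := hasSum_integral_poissonMeasure (integrable_exp_mul_poissonMeasure r s)
  rw [mgf, hmgf.unique (hexp.congr_fun fun k ↦ ?_)]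
  · ring_nf
  · rw [mul_comm s, Real.exp_nat_mul, smul_eq_mul]
    ring

-- Chernoff's bound at the parameter `log x`, whose sign selects the tail: the event is the upper
-- tail `x * r ≤ k` for `1 < x` and the lower tail `k ≤ x * r` for `x < 1`.
lemma measureReal_poissonMeasure_deviation_le (r : NNReal) {x : ℝ} (hx : 0 < x) :
    (poissonMeasure r).real {k : ℕ | Real.log x * (x * r) ≤ Real.log x * k} ≤
      Real.exp (-(r * H x)) := by
  have hchernoff := measure_ge_le_exp_mul_mgf (μ := poissonMeasure r)
    (X := fun k : ℕ ↦ Real.log x * k) (Real.log x * (x * r)) zero_le_one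
    (by simpa only [one_mul] using integrable_exp_mul_poissonMeasure r (Real.log x))
  rw [mgf_const_mul, mul_one, mgf_poissonMeasure, Real.exp_log hx, ← Real.exp_add] at hchernoff
  refine hchernoff.trans_eq (congrArg Real.exp ?_)
  rw [H]
  ring

lemma H_pos {x : ℝ} (hx : 0 < x) (hx1 : x ≠ 1) : 0 < H x := by
  have hlog := Real.log_lt_sub_one_of_pos (inv_pos.2 hx) (inv_ne_one.2 hx1)
  rw [Real.log_inv] at hlog
  have hmul := mul_lt_mul_of_pos_left hlog hx
  rw [mul_sub, mul_inv_cancel₀ hx.ne'] at hmul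
  rw [H]
  linarith

end Poisson

section Concentration

lemma ae_eventually_notMem_of_summable [IsFiniteMeasure P] {A : ℕ → Set Ω} {b : ℕ → ℝ}
    (hb : Summable b) (h : ∀ᶠ n in atTop, P.real (A n) ≤ b n) :
    ∀ᵐ ω ∂P, ∀ᶠ n in atTop, ω ∉ A n := by
  have hsum : Summable fun n ↦ P.real (A n) :=
    .of_norm_bounded_eventually_nat hb (h.mono fun n hn ↦ by
      rwa [Real.norm_of_nonneg measureReal_nonneg])
  refine ae_eventually_notMem ?_
  simpa only [ofReal_measureReal (measure_ne_top P _)] using hsum.tsum_ofReal_ne_top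

lemma map_N_eq_poissonMeasure (M : Model d P) (n : ℕ) : P.map (M.N n) = poissonMeasure n :=
  Measure.ext_of_singleton fun k ↦ by
    rw [Measure.map_apply (M.N_meas n) (measurableSet_singleton k), poissonMeasure_singleton]
    exact M.N_poisson n k

lemma ae_eventually_log_mul_N_lt [IsFiniteMeasure P] (M : Model d P) {x : ℝ} (hx : 0 < x)
    (hx1 : x ≠ 1) :
    ∀ᵐ ω ∂P, ∀ᶠ n : ℕ in atTop, Real.log x * M.N n ω < Real.log x * (x * n) := by
  have hdev (n : ℕ) : P.real {ω | Real.log x * (x * n) ≤ Real.log x * M.N n ω} ≤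
      Real.exp (n * -H x) := by
    have h := measureReal_poissonMeasure_deviation_le n hx
    rw [← map_N_eq_poissonMeasure M, map_measureReal_apply (M.N_meas n) .of_discrete] at h
    simpa using h
  filter_upwards [ae_eventually_notMem_of_summable
    (Real.summable_exp_nat_mul_iff.2 (neg_neg_of_pos (H_pos hx hx1))) (.of_forall hdev)] with ω hω
  exact hω.mono fun n ↦ not_le.1

lemma ae_eventually_N_mem_Ioo [IsFiniteMeasure P] (M : Model d P) {ρ : ℝ} (hρ : 1 < ρ) :
    ∀ᵐ ω ∂P, ∀ᶠ n : ℕ in atTop, (M.N n ω : ℝ) ∈ Ioo (n / ρ) (ρ * n) := by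
  have hρ0 : 0 < ρ := one_pos.trans hρ
  have hlog := Real.log_pos hρ
  filter_upwards [ae_eventually_log_mul_N_lt M hρ0 hρ.ne',
    ae_eventually_log_mul_N_lt M (inv_pos.2 hρ0) (inv_ne_one.2 hρ.ne')] with ω hupper hlower
  filter_upwards [hupper, hlower] with n hupper hlower
  rw [Real.log_inv, neg_mul, neg_mul, neg_lt_neg_iff, ← div_eq_inv_mul] at hlower
  exact ⟨lt_of_mul_lt_mul_left hlower hlog.le, lt_of_mul_lt_mul_left hupper hlog.le⟩

end Concentration

section Radius

/-- The radius with `α r ^ d = γ log s / s`, extending `rhat` to real arguments `s`. -/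
def radius (M : Model d P) (γ s : ℝ) : ℝ :=
  (γ * Real.log s / (M.α * s)) ^ ((1 : ℝ) / d)

lemma radius_pos (M : Model d P) {γ s : ℝ} (hγ : 0 < γ) (hs : 1 < s) : 0 < radius M γ s := by
  have := Real.log_pos hs
  have := M.α_pos
  rw [radius]
  positivity

lemma α_mul_radius_pow (hd : d ≠ 0) (M : Model d P) {γ s : ℝ} (hγ : 0 ≤ γ) (hs : 1 ≤ s) :
    M.α * radius M γ s ^ d = γ * Real.log s / s := by
  have hα := M.α_pos
  have hlog := Real.log_nonneg hs
  rw [radius, one_div, Real.rpow_inv_natCast_pow (by positivity) hd]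
  field_simp

lemma tendsto_const_mul_log_div_self (γ : ℝ) :
    Tendsto (fun s ↦ γ * Real.log s / s) atTop (nhds 0) := by
  simpa [mul_div_assoc] using
    (Real.isLittleO_log_id_atTop.tendsto_div_nhds_zero).const_mul γ

lemma eventually_radius_le_one (M : Model d P) {γ : ℝ} (hγ : 0 ≤ γ) :
    ∀ᶠ s in atTop, radius M γ s ≤ 1 := by
  filter_upwards [(tendsto_const_mul_log_div_self (γ / M.α)).eventually_le_const one_pos,
    eventually_ge_atTop 1] with s hs hs1
  have hα := M.α_pos
  have hlog := Real.log_nonneg hs1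
  refine Real.rpow_le_one (by positivity) (le_of_eq_of_le ?_ hs) (by positivity)
  field_simp

end Radius

section UpperBound

variable [IsProbabilityMeasure P]

lemma measureReal_compl_noneIsolated_radius_le (hd : d ≠ 0) (M : Model d P) {n : ℕ} (hn : 2 ≤ n)
    (hr1 : radius M (12 * M.α / meanConn M 1) n ≤ 1) :
    P.real (noneIsolated M (radius M (12 * M.α / meanConn M 1) n) (2 * n) (n / 2 + 1))ᶜ ≤
      2 * (1 / (n : ℝ) ^ 2) := by
  set C := 12 * M.α / meanConn M 1
  set r := radius M C n
  have hα := M.α_pos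
  have hθ₁ := meanConn_one_pos hd M
  have hn1 : (1 : ℝ) < n := by exact_mod_cast hn
  have hC : 0 < C := by positivity
  have hr : 0 < r := radius_pos M hC hn1
  have hθ : 12 * Real.log n / n ≤ meanConn M r := by
    refine le_of_eq_of_le ?_ (pow_mul_meanConn_one_le M hr hr1)
    refine mul_left_cancel₀ hα.ne' ?_
    rw [← mul_assoc, α_mul_radius_pow hd M hC.le hn1.le]
    simp only [C]
    field_simp
  have hhalf : (n : ℝ) / 4 ≤ (n / 2 : ℕ) := by
    have : (n : ℝ) ≤ 4 * (n / 2 : ℕ) := by exact_mod_cast (by omega : n ≤ 4 * (n / 2))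
    linarith
  calc P.real (noneIsolated M r (2 * n) (n / 2 + 1))ᶜ
      ≤ (2 * n : ℕ) * Real.exp (-((n / 2 : ℕ) * meanConn M r)) :=
        measureReal_compl_noneIsolated_le M hr _ _
    _ ≤ (2 * n : ℕ) * Real.exp (-(n / 4 * (12 * Real.log n / n))) := by
        have := Real.log_nonneg hn1.le
        gcongr
    _ = 2 * n * Real.exp (-((3 : ℕ) * Real.log n)) := by
        push_cast
        congr 3
        field_simp
        ring
    _ = 2 * (1 / (n : ℝ) ^ 2) := by
        rw [Real.exp_neg, Real.exp_nat_mul, Real.exp_log (by positivity)]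
        field_simp

lemma ae_eventually_isolatedCount_radius_eq_zero (hd : d ≠ 0) (M : Model d P) :
    ∀ᵐ ω ∂P, ∀ᶠ n : ℕ in atTop,
      isolatedCount M n (radius M (12 * M.α / meanConn M 1) n) ω = 0 := by
  have hC : 0 < 12 * M.α / meanConn M 1 :=
    div_pos (mul_pos (by norm_num) M.α_pos) (meanConn_one_pos hd M)
  have hbound := ((tendsto_natCast_atTop_atTop.eventually (eventually_radius_le_one M hC.le)).and
    (eventually_ge_atTop 2)).mono fun n hn ↦ measureReal_compl_noneIsolated_radius_le hd M hn.2 hn.1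
  filter_upwards [ae_eventually_notMem_of_summable
      ((Real.summable_one_div_nat_pow.2 one_lt_two).mul_left 2) hbound,
    ae_eventually_N_mem_Ioo M one_lt_two] with ω hnone hN
  filter_upwards [hnone, hN, eventually_ge_atTop 2] with n hnone hN hn
  have hupper : M.N n ω < 2 * n := by exact_mod_cast hN.2
  have hlower : n < M.N n ω * 2 := by
    exact_mod_cast (div_lt_iff₀ two_pos).1 hN.1
  exact isolatedCount_eq_zero_iff.2 <| noneIsolated_subset (radius_pos M hC (by exact_mod_cast hn))
    le_rfl hupper.le (by omega) (notMem_compl_iff.1 hnone)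

lemma ae_eventually_mul_critRadius_pow_div_log_le (hd : d ≠ 0) (M : Model d P) :
    ∀ᵐ ω ∂P, ∀ᶠ n : ℕ in atTop,
      M.α * n * critRadius M n ω ^ d / Real.log n ≤ 12 * M.α / meanConn M 1 := by
  have hα := M.α_pos
  have hC : 0 < 12 * M.α / meanConn M 1 := by have := meanConn_one_pos hd M; positivity
  filter_upwards [ae_eventually_isolatedCount_radius_eq_zero hd M] with ω hω
  filter_upwards [hω, eventually_ge_atTop 2] with n hzero hn
  have hn1 : (1 : ℝ) < n := by exact_mod_cast hn
  rw [div_le_iff₀ (Real.log_pos hn1)]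
  calc M.α * n * critRadius M n ω ^ d
      ≤ M.α * n * radius M (12 * M.α / meanConn M 1) n ^ d := by
        have := critRadius_nonneg M n ω
        gcongr
        exact critRadius_le (radius_pos M hC hn1) hzero
    _ = n * (M.α * radius M (12 * M.α / meanConn M 1) n ^ d) := by ring
    _ = 12 * M.α / meanConn M 1 * Real.log n := by
        rw [α_mul_radius_pow hd M hC.le hn1.le]
        field_simp

end UpperBound

section LowerBound

lemma exp_neg_mul_le_one_sub_pow {θ ρ : ℝ} (hρ : 0 < ρ) (hθ0 : 0 ≤ θ) (hθ : θ ≤ 1 - 1 / ρ)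
    (K : ℕ) : Real.exp (-(K * (ρ * θ))) ≤ (1 - θ) ^ K := by
  have hinv : 1 / ρ ≤ 1 - θ := by linarith
  have hpos : 0 < 1 - θ := (one_div_pos.2 hρ).trans_le hinv
  have hle : (1 - θ)⁻¹ ≤ ρ := by rwa [inv_le_comm₀ hpos hρ, ← one_div]
  rw [← mul_neg, Real.exp_nat_mul]
  refine pow_le_pow_left₀ (Real.exp_nonneg _) ?_ _
  rw [← Real.le_log_iff_exp_le hpos]
  calc -(ρ * θ) ≤ -((1 - θ)⁻¹ * θ) := by gcongr
    _ = 1 - (1 - θ)⁻¹ := by field_simp; ring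
    _ ≤ Real.log (1 - θ) := Real.one_sub_inv_le_log_of_pos hpos

lemma rpow_neg_le_one_sub_meanConn_pow (hd : d ≠ 0) (M : Model d P) {γ ρ s : ℝ} (hγ : 0 < γ)
    (hρ : 1 < ρ) (hs : 1 < s) (hgap : 1 ≤ (ρ - 1) * s) (hθ : γ * Real.log s / s ≤ 1 - 1 / ρ) :
    s ^ (-(ρ ^ 3 * γ)) ≤ (1 - meanConn M (radius M γ s)) ^ (⌊ρ * s⌋₊ + 1) := by
  have hρ0 : 0 < ρ := one_pos.trans hρ
  have hr := radius_pos M hγ hs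
  have hle : meanConn M (radius M γ s) ≤ γ * Real.log s / s :=
    (meanConn_le M hr).trans_eq (α_mul_radius_pow hd M hγ.le hs.le)
  have hθ0 := meanConn_nonneg M hr
  have hfloor : (⌊ρ * s⌋₊ : ℝ) ≤ ρ * s := Nat.floor_le (by positivity)
  refine le_trans ?_ (exp_neg_mul_le_one_sub_pow hρ0 hθ0 (hle.trans hθ) _)
  rw [Real.rpow_def_of_pos (by positivity), mul_neg, Real.exp_le_exp, neg_le_neg_iff]
  calc ((⌊ρ * s⌋₊ + 1 : ℕ) : ℝ) * (ρ * meanConn M (radius M γ s))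
      ≤ (ρ ^ 2 * s) * (ρ * (γ * Real.log s / s)) := by
        gcongr
        push_cast
        nlinarith
    _ = Real.log s * (ρ ^ 3 * γ) := by field_simp

lemma one_div_ceil_add_meanConn_le (hd : d ≠ 0) (M : Model d P) {γ ρ s : ℝ} (hγ : 0 < γ)
    (hγ1 : γ ≤ 1) (hρ : 0 < ρ) (hs : 1 < s) (hlog : 1 ≤ Real.log s) :
    1 / ⌈s / ρ ^ 2⌉₊ + 2 * meanConn M (radius M γ s) +
        ⌊ρ * s⌋₊ * meanConn M (radius M γ s) ^ 2 ≤
      (ρ ^ 2 + 2 + ρ) * (Real.log s ^ 2 * s⁻¹) := by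
  have hr := radius_pos M hγ hs
  have hθ0 := meanConn_nonneg M hr
  have hθ : meanConn M (radius M γ s) ≤ Real.log s / s := by
    refine ((meanConn_le M hr).trans_eq (α_mul_radius_pow hd M hγ.le hs.le)).trans ?_
    gcongr
    exact mul_le_of_le_one_left (by positivity) hγ1
  have hsq : Real.log s ≤ Real.log s ^ 2 := le_self_pow₀ hlog two_ne_zero
  calc 1 / ⌈s / ρ ^ 2⌉₊ + 2 * meanConn M (radius M γ s) +
        ⌊ρ * s⌋₊ * meanConn M (radius M γ s) ^ 2
      ≤ 1 / (s / ρ ^ 2) + 2 * (Real.log s / s) + ρ * s * (Real.log s / s) ^ 2 := by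
        gcongr
        · exact Nat.le_ceil _
        · exact Nat.floor_le (by positivity)
    _ = (ρ ^ 2 * 1 + 2 * Real.log s + ρ * Real.log s ^ 2) * s⁻¹ := by field_simp
    _ ≤ (ρ ^ 2 * Real.log s ^ 2 + 2 * Real.log s ^ 2 + ρ * Real.log s ^ 2) * s⁻¹ := by
        gcongr
        exact hlog.trans hsq
    _ = _ := by ring

variable [IsProbabilityMeasure P]

lemma eventually_measureReal_noneIsolated_radius_le (hd : d ≠ 0) (M : Model d P) {γ ρ : ℝ}
    (hγ : 0 < γ) (hγ1 : γ ≤ 1) (hρ : 1 < ρ) :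
    ∀ᶠ s : ℝ in atTop,
      P.real (noneIsolated M (radius M γ s) ⌈s / ρ ^ 2⌉₊ ⌊ρ * s⌋₊) ≤
        (ρ ^ 2 + 2 + ρ) * (Real.log s ^ 2 * s ^ (ρ ^ 3 * γ - 1)) := by
  have hρ0 : 0 < ρ := one_pos.trans hρ
  have hθ : 0 < 1 - 1 / ρ := sub_pos.2 ((div_lt_one hρ0).2 hρ)
  filter_upwards [eventually_ge_atTop 3, Real.tendsto_log_atTop.eventually_ge_atTop 1,
    (tendsto_const_mul_log_div_self γ).eventually_le_const hθ,
    (tendsto_id.const_mul_atTop (sub_pos.2 hρ)).eventually_ge_atTop 1] with s hs hlog hθ hgap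
  rw [id] at hgap
  have hs0 : 0 < s := by linarith
  have hs1 : 1 < s := by linarith
  have hmK : ⌈s / ρ ^ 2⌉₊ ≤ ⌊ρ * s⌋₊ := by
    refine Nat.le_floor ((Nat.ceil_lt_add_one (by positivity)).le.trans ?_)
    linarith [div_le_self hs0.le (one_le_pow₀ hρ.le : 1 ≤ ρ ^ 2)]
  have hK : 3 ≤ ⌊ρ * s⌋₊ := Nat.le_floor (by push_cast; nlinarith)
  have hmoment := (measureReal_noneIsolated_mul_pow_le M (radius_pos M hγ hs1)
    (Nat.ceil_pos.2 (by positivity)) hmK hK).trans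
      (one_div_ceil_add_meanConn_le hd M hγ hγ1 hρ0 hs1 hlog)
  have hpow := rpow_neg_le_one_sub_meanConn_pow hd M hγ hρ hs1 hgap hθ
  have hpos : 0 < s ^ (-(ρ ^ 3 * γ)) := Real.rpow_pos_of_pos hs0 _
  refine le_of_mul_le_mul_right ?_ hpos
  refine ((mul_le_mul_of_nonneg_left hpow measureReal_nonneg).trans hmoment).trans_eq ?_
  rw [mul_assoc, mul_assoc, ← Real.rpow_add hs0, ← Real.rpow_neg_one]
  ring_nf

lemma summable_log_pow_sq_mul_rpow {ρ a : ℝ} (hρ : 1 < ρ) (ha : a < 0) :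
    Summable fun k : ℕ ↦ Real.log (ρ ^ k) ^ 2 * (ρ ^ k) ^ a := by
  have hq : ‖ρ ^ a‖ < 1 := by
    rw [Real.norm_of_nonneg (by positivity)]
    exact Real.rpow_lt_one_of_one_lt_of_neg hρ ha
  refine ((summable_pow_mul_geometric_of_norm_lt_one 2 hq).mul_left (Real.log ρ ^ 2)).congr
    fun k ↦ ?_
  rw [Real.log_pow, ← Real.rpow_natCast_mul (by positivity), mul_comm (k : ℝ) a,
    Real.rpow_mul_natCast (by positivity)]
  ring

lemma ae_eventually_notMem_noneIsolated (hd : d ≠ 0) (M : Model d P) {γ ρ : ℝ} (hγ : 0 < γ)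
    (hγ1 : γ ≤ 1) (hρ : 1 < ρ) (hγρ : ρ ^ 3 * γ < 1) :
    ∀ᵐ ω ∂P, ∀ᶠ k : ℕ in atTop,
      ω ∉ noneIsolated M (radius M γ (ρ ^ k)) ⌈ρ ^ k / ρ ^ 2⌉₊ ⌊ρ * ρ ^ k⌋₊ :=
  ae_eventually_notMem_of_summable
    ((summable_log_pow_sq_mul_rpow hρ (sub_neg.2 hγρ)).mul_left (ρ ^ 2 + 2 + ρ))
    ((tendsto_pow_atTop_atTop_of_one_lt hρ).eventually
      (eventually_measureReal_noneIsolated_radius_le hd M hγ hγ1 hρ))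

lemma ae_eventually_radius_le_critRadius (hd : d ≠ 0) (M : Model d P) {γ ρ : ℝ} (hγ : 0 < γ)
    (hγ1 : γ ≤ 1) (hρ : 1 < ρ) (hγρ : ρ ^ 3 * γ < 1) :
    ∀ᵐ ω ∂P, ∀ᶠ n : ℕ in atTop,
      ∃ s : ℝ, n ≤ s ∧ s ≤ ρ * n ∧ radius M γ s ≤ critRadius M n ω := by
  have hρ0 : 0 < ρ := one_pos.trans hρ
  have hC : 0 < 12 * M.α / meanConn M 1 :=
    div_pos (mul_pos (by norm_num) M.α_pos) (meanConn_one_pos hd M)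
  filter_upwards [ae_eventually_notMem_noneIsolated hd M hγ hγ1 hρ hγρ,
    ae_eventually_isolatedCount_radius_eq_zero hd M, ae_eventually_N_mem_Ioo M hρ]
    with ω hsome hzero hN
  obtain ⟨k₀, hk₀⟩ := eventually_atTop.1 hsome
  filter_upwards [hzero, hN, eventually_ge_atTop 2,
    tendsto_natCast_atTop_atTop.eventually_ge_atTop (ρ ^ k₀)] with n hzero hN hn hnk
  have hn1 : (1 : ℝ) < n := by exact_mod_cast hn
  obtain ⟨k, hk, hk'⟩ := exists_nat_pow_near hn1.le hρ
  have hkk₀ : k₀ < k + 1 := (pow_lt_pow_iff_right₀ hρ).1 (hnk.trans_lt hk')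
  have hs : ρ ^ (k + 1) ≤ ρ * n := by
    rw [pow_succ']
    gcongr
  refine ⟨ρ ^ (k + 1), hk'.le, hs, le_critRadius (radius_pos M hC hn1) hzero
    (Nat.ceil_le.2 ?_) (Nat.le_floor ?_) (hk₀ _ hkk₀.le)⟩
  · refine le_trans ?_ hN.1.le
    rw [pow_two, ← div_div]
    gcongr
    rwa [div_le_iff₀' hρ0]
  · exact hN.2.le.trans (by gcongr)

lemma ae_eventually_le_mul_critRadius_pow_div_log (hd : d ≠ 0) (M : Model d P) {γ : ℝ}
    (hγ : 0 < γ) (hγ1 : γ < 1) :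
    ∀ᵐ ω ∂P, ∀ᶠ n : ℕ in atTop, γ ≤ M.α * n * critRadius M n ω ^ d / Real.log n := by
  obtain ⟨ρ, hγρ, hρ⟩ : ∃ ρ : ℝ, ρ ^ 3 * (ρ * γ) < 1 ∧ 1 < ρ := by
    have hcont : Tendsto (fun ρ : ℝ ↦ ρ ^ 3 * (ρ * γ)) (nhdsWithin 1 (Ioi 1))
        (nhds (1 ^ 3 * (1 * γ))) :=
      tendsto_nhdsWithin_of_tendsto_nhds (Continuous.tendsto (by fun_prop) 1)
    exact ((hcont.eventually_lt_const (by simpa using hγ1)).and self_mem_nhdsWithin).exists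
  have hρ0 : 0 < ρ := one_pos.trans hρ
  have hγ' : 0 < ρ * γ := by positivity
  have hγ1' : ρ * γ ≤ 1 := (le_mul_of_one_le_left hγ'.le (one_le_pow₀ hρ.le)).trans hγρ.le
  have hα := M.α_pos
  filter_upwards [ae_eventually_radius_le_critRadius hd M hγ' hγ1' hρ hγρ] with ω hω
  filter_upwards [hω, eventually_ge_atTop 2] with n ⟨s, hns, hsn, hcrit⟩ hn
  have hn1 : (1 : ℝ) < n := by exact_mod_cast hn
  have hs1 : 1 < s := hn1.trans_le hns
  have : 0 < s := by linarith
  have hr := radius_pos M hγ' hs1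
  rw [le_div_iff₀ (Real.log_pos hn1)]
  calc γ * Real.log n ≤ γ * Real.log s := by gcongr
    _ = s / ρ * (M.α * radius M (ρ * γ) s ^ d) := by
        rw [α_mul_radius_pow hd M hγ'.le hs1.le]
        field_simp
    _ ≤ n * (M.α * critRadius M n ω ^ d) := by
        gcongr
        rwa [div_le_iff₀' hρ0]
    _ = M.α * n * critRadius M n ω ^ d := by ring

end LowerBound

theorem critRadius_liminf_ge_general (hd : d ≠ 0) [IsProbabilityMeasure P] (M : Model d P) :
    ∀ᵐ ω ∂P, 1 ≤ Filter.liminf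
      (fun n : ℕ => M.α * n * critRadius M n ω ^ d / Real.log n) atTop := by
  obtain ⟨γ, -, hγ, hlim⟩ := exists_seq_strictMono_tendsto' (zero_lt_one (α := ℝ))
  have hbelow : ∀ᵐ ω ∂P, ∀ k, ∀ᶠ n : ℕ in atTop,
      γ k ≤ M.α * n * critRadius M n ω ^ d / Real.log n :=
    ae_all_iff.2 fun k ↦ ae_eventually_le_mul_critRadius_pow_div_log hd M (hγ k).1 (hγ k).2
  filter_upwards [hbelow, ae_eventually_mul_critRadius_pow_div_log_le hd M] with ω hbelow habove
  exact le_of_tendsto' hlim fun k ↦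
    le_liminf_of_le (isCoboundedUnder_ge_of_eventually_le atTop habove) (hbelow k)

/-- Theorem 1(iii): a.s. `liminf α n d_n^d / log n ≥ (c-3d)/(c-d)`. -/
theorem critRadius_liminf_ge (hd : 2 ≤ d) [IsProbabilityMeasure P] (M : Model d P)
    {c : ℝ} (hc : (3 : ℝ) * d < c)
    (hg : M.g =o[atTop] fun r : ℝ => r ^ (-c)) :
    ∀ᵐ ω ∂P, (c - 3 * d) / (c - d) ≤ Filter.liminf
      (fun n : ℕ => M.α * n * critRadius M n ω ^ d / Real.log n) atTop := by
  have hratio : (c - 3 * d) / (c - d) ≤ 1 := div_le_one_of_le₀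
    (by linarith [d.cast_nonneg (α := ℝ)]) (by linarith [d.cast_nonneg (α := ℝ)])
  exact (critRadius_liminf_ge_general (by omega) M).mono fun _ ↦ hratio.trans

end RCM
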